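/- Fix n ∈ ℕ. Let σ and η be maps sending each pair of n×n positive definite complex matrices to an n×n positive definite complex matrix, and let f, g, h : (0,∞) → (0,∞) be continuous functions. Define the adjoint operation σ*(A,B) = (σ(A⁻¹, B⁻¹))⁻¹ (and similarly η*), and the adjoint function f*(x) = 1/f(1/x) (and similarly g*, h*). Then the following are equivalent: (1) f(σ(A,B)) ≤ η(g(A), h(B)) for all positive definite A, B; (2) f*(σ*(A,B)) ≥ η*(g*(A), h*(B)) for all positive definite A, B. -/

import Mathlib

open Matrix
open scoped ComplexOrder

/-- The Loewner order on matrices: `A ≤ B` iff `B - A` is positive semidefinite. -/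
def MLE {n : ℕ} (A B : Matrix (Fin n) (Fin n) ℂ) : Prop := (B - A).PosSemidef

/-- The `t`-weighted harmonic mean `A !_t B = ((1-t)A⁻¹ + tB⁻¹)⁻¹`. -/
noncomputable def wharm {n : ℕ} (t : ℝ) (A B : Matrix (Fin n) (Fin n) ℂ) :
    Matrix (Fin n) (Fin n) ℂ := ((1 - t) • A⁻¹ + t • B⁻¹)⁻¹

/-- The `t`-weighted arithmetic mean `A ∇_t B = (1-t)A + tB`. -/
noncomputable def warith {n : ℕ} (t : ℝ) (A B : Matrix (Fin n) (Fin n) ℂ) :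
    Matrix (Fin n) (Fin n) ℂ := (1 - t) • A + t • B

/-- Real powers of a matrix, via the continuous functional calculus. -/
noncomputable def mpow {n : ℕ} (A : Matrix (Fin n) (Fin n) ℂ) (r : ℝ) :
    Matrix (Fin n) (Fin n) ℂ := cfc (fun x : ℝ => x ^ r) A

/-- The `t`-weighted geometric mean `A #_t B = A^{1/2} (A^{-1/2} B A^{-1/2})^t A^{1/2}`. -/
noncomputable def wgeom {n : ℕ} (t : ℝ) (A B : Matrix (Fin n) (Fin n) ℂ) :
    Matrix (Fin n) (Fin n) ℂ :=
  mpow A (1/2) * mpow (mpow A (-(1/2)) * B * mpow A (-(1/2))) t * mpow A (1/2)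

/-- `f` is operator monotone (increasing): order preserving on positive definite
matrices of every size, via the continuous functional calculus. -/
def OperatorMonotone (f : ℝ → ℝ) : Prop :=
  ∀ (n : ℕ) (A B : Matrix (Fin n) (Fin n) ℂ), A.PosDef → B.PosDef →
    MLE A B → MLE (cfc f A) (cfc f B)

/-- `f` is operator monotone decreasing: order reversing on positive definite
matrices of every size, via the continuous functional calculus. -/
def OperatorAntitone (f : ℝ → ℝ) : Prop :=
  ∀ (n : ℕ) (A B : Matrix (Fin n) (Fin n) ℂ), A.PosDef → B.PosDef →
    MLE A B → MLE (cfc f B) (cfc f A)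

/-!
On positive definite matrices inversion is an order-reversing involution and intertwines `f` with
its adjoint: `f* (A⁻¹) = (f A)⁻¹`. Hence the second inequality at `(A⁻¹, B⁻¹)` reads
`(η (g A) (h B))⁻¹ ≤ (f (σ A B))⁻¹`, which is the inverted form of the first one at `(A, B)`.
The functional calculus of a matrix only sees its finite spectrum, on which every function is
continuous.
-/

/-- The adjoint function `f* x = 1 / f (1 / x)`, the transform of `f` that matches matrix inversion
under the functional calculus. Since `0⁻¹ = 0`, it is meaningful only where `x ≠ 0` and
`f x⁻¹ ≠ 0`. -/
def adjointFun {α β : Type*} [Inv α] [Inv β] (f : α → β) (x : α) : β := (f x⁻¹)⁻¹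

/-- The adjoint operation `σ* (A, B) = (σ (A⁻¹, B⁻¹))⁻¹`, for matrices possibly of three different
sizes. The inverse of a singular matrix is `0`, so it is meaningful only on invertible arguments
with invertible value. -/
def adjointOp {α β γ : Type*} [Inv α] [Inv β] [Inv γ] (σ : α → β → γ) (A : α) (B : β) : γ :=
  (σ A⁻¹ B⁻¹)⁻¹

section

open scoped MatrixOrder

variable {𝕜 m n p : Type*} [RCLike 𝕜] [Fintype m] [DecidableEq m] [Fintype n] [DecidableEq n]
  [Fintype p] [DecidableEq p]

theorem inv_inv_of_posDef {A : Matrix m m 𝕜} (hA : A.PosDef) : A⁻¹⁻¹ = A :=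
  A.nonsing_inv_nonsing_inv (A.isUnit_iff_isUnit_det.mp hA.isUnit)

theorem forall₂_posDef_inv_iff {P : Matrix m m 𝕜 → Matrix n n 𝕜 → Prop} :
    (∀ A B, A.PosDef → B.PosDef → P A⁻¹ B⁻¹) ↔ ∀ A B, A.PosDef → B.PosDef → P A B where
  mp H A B hA hB := by
    simpa only [inv_inv_of_posDef hA, inv_inv_of_posDef hB] using H A⁻¹ B⁻¹ hA.inv hB.inv
  mpr H A B hA hB := H A⁻¹ B⁻¹ hA.inv hB.inv

-- Both sides are Schur complements of the block matrix `[B, 1; 1, A⁻¹]`.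
theorem inv_le_inv_iff_of_posDef {A B : Matrix m m 𝕜} (hA : A.PosDef) (hB : B.PosDef) :
    B⁻¹ ≤ A⁻¹ ↔ A ≤ B := by
  have := hB.isUnit.invertible
  have := hA.inv.isUnit.invertible
  have schur_B := hB.fromBlocks₁₁ 1 A⁻¹
  have schur_A := PosDef.fromBlocks₂₂ B 1 hA.inv
  simp only [conjTranspose_one, Matrix.one_mul, Matrix.mul_one, inv_inv_of_posDef hA]
    at schur_B schur_A
  exact schur_B.symm.trans schur_A

theorem spectrum_pos_of_posDef {A : Matrix m m 𝕜} (hA : A.PosDef) {x : ℝ}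
    (hx : x ∈ spectrum ℝ A) : 0 < x :=
  (StarOrderedRing.isStrictlyPositive_iff_spectrum_pos A hA.isHermitian).mp
    hA.isStrictlyPositive x hx

theorem posDef_cfc_iff {A : Matrix m m 𝕜} (hA : A.IsHermitian) {f : ℝ → ℝ} :
    (cfc f A).PosDef ↔ ∀ x ∈ spectrum ℝ A, 0 < f x := by
  rw [← isStrictlyPositive_iff_posDef,
    cfc_isStrictlyPositive_iff f A (A.finite_real_spectrum.continuousOn f)
      hA.isSelfAdjoint]

theorem posDef_cfc {A : Matrix m m 𝕜} (hA : A.PosDef) {f : ℝ → ℝ} (hf : ∀ x, 0 < x → 0 < f x) :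
    (cfc f A).PosDef :=
  (posDef_cfc_iff hA.isHermitian).mpr fun x hx => hf x (spectrum_pos_of_posDef hA hx)

theorem cfc_adjointFun_inv {A : Matrix m m 𝕜} (hA : A.IsHermitian) (hA' : IsUnit A) {f : ℝ → ℝ}
    (hf : ∀ x ∈ spectrum ℝ A, f x ≠ 0) : cfc (adjointFun f) A⁻¹ = (cfc f A)⁻¹ := by
  obtain ⟨u, rfl⟩ := hA'
  have hfin := (u : Matrix m m 𝕜).finite_real_spectrum
  calc cfc (adjointFun f) (u : Matrix m m 𝕜)⁻¹
      = cfc (fun x => adjointFun f x⁻¹) (u : Matrix m m 𝕜) := by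
        rw [← coe_units_inv, cfc_comp_inv (adjointFun f) u ((hfin.image _).continuousOn _)
          hA.isSelfAdjoint]
    _ = cfc (fun x => (f x)⁻¹) (u : Matrix m m 𝕜) := by simp only [adjointFun, inv_inv]
    _ = (cfc f (u : Matrix m m 𝕜))⁻¹ := by
        rw [cfc_inv f _ hf (hfin.continuousOn f) hA.isSelfAdjoint, nonsing_inv_eq_ringInverse]

theorem cfc_adjointFun_inv_of_posDef {A : Matrix m m 𝕜} (hA : A.PosDef) {f : ℝ → ℝ}
    (hf : ∀ x, 0 < x → 0 < f x) : cfc (adjointFun f) A⁻¹ = (cfc f A)⁻¹ :=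
  cfc_adjointFun_inv hA.isHermitian hA.isUnit fun x hx => (hf x (spectrum_pos_of_posDef hA hx)).ne'

theorem adjointOp_inv_inv_of_posDef (σ : Matrix m m 𝕜 → Matrix n n 𝕜 → Matrix p p 𝕜)
    {A : Matrix m m 𝕜} {B : Matrix n n 𝕜} (hA : A.PosDef) (hB : B.PosDef) :
    adjointOp σ A⁻¹ B⁻¹ = (σ A B)⁻¹ := by
  rw [adjointOp, inv_inv_of_posDef hA, inv_inv_of_posDef hB]

variable {σ η : Matrix m m 𝕜 → Matrix n n 𝕜 → Matrix p p 𝕜} {f g h : ℝ → ℝ}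

theorem adjointOp_le_cfc_adjointFun_iff
    (hη : ∀ A B, A.PosDef → B.PosDef → (η A B).PosDef)
    (hf : ∀ x, 0 < x → 0 < f x) (hg : ∀ x, 0 < x → 0 < g x) (hh : ∀ x, 0 < x → 0 < h x)
    {A : Matrix m m 𝕜} {B : Matrix n n 𝕜} (hA : A.PosDef) (hB : B.PosDef)
    (hσ : (σ A B).PosDef) :
    adjointOp η (cfc (adjointFun g) A⁻¹) (cfc (adjointFun h) B⁻¹) ≤
        cfc (adjointFun f) (adjointOp σ A⁻¹ B⁻¹) ↔
      cfc f (σ A B) ≤ η (cfc g A) (cfc h B) := by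
  have hgA := posDef_cfc hA hg
  have hhB := posDef_cfc hB hh
  rw [cfc_adjointFun_inv_of_posDef hA hg, cfc_adjointFun_inv_of_posDef hB hh,
    adjointOp_inv_inv_of_posDef η hgA hhB, adjointOp_inv_inv_of_posDef σ hA hB,
    cfc_adjointFun_inv_of_posDef hσ hf]
  exact inv_le_inv_iff_of_posDef (posDef_cfc hσ hf) (hη _ _ hgA hhB)

theorem stmt_2_general
    (hσ : ∀ A B, A.PosDef → B.PosDef → (σ A B).PosDef)
    (hη : ∀ A B, A.PosDef → B.PosDef → (η A B).PosDef)
    (hf : ∀ x, 0 < x → 0 < f x) (hg : ∀ x, 0 < x → 0 < g x) (hh : ∀ x, 0 < x → 0 < h x) :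
    (∀ A B, A.PosDef → B.PosDef → cfc f (σ A B) ≤ η (cfc g A) (cfc h B)) ↔
      ∀ A B, A.PosDef → B.PosDef →
        adjointOp η (cfc (adjointFun g) A) (cfc (adjointFun h) B) ≤
          cfc (adjointFun f) (adjointOp σ A B) := by
  refine Iff.trans ?_ forall₂_posDef_inv_iff
  exact forall₄_congr fun A B hA hB =>
    (adjointOp_le_cfc_adjointFun_iff hη hf hg hh hA hB (hσ A B hA hB)).symm

end

theorem stmt_2 (n : ℕ)
    (σ η : Matrix (Fin n) (Fin n) ℂ → Matrix (Fin n) (Fin n) ℂ → Matrix (Fin n) (Fin n) ℂ)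
    (hσ : ∀ A B : Matrix (Fin n) (Fin n) ℂ, A.PosDef → B.PosDef → (σ A B).PosDef)
    (hη : ∀ A B : Matrix (Fin n) (Fin n) ℂ, A.PosDef → B.PosDef → (η A B).PosDef)
    (f g h : ℝ → ℝ)
    (hf : ContinuousOn f (Set.Ioi 0)) (hg : ContinuousOn g (Set.Ioi 0))
    (hh : ContinuousOn h (Set.Ioi 0))
    (hf' : ∀ x ∈ Set.Ioi (0:ℝ), f x ∈ Set.Ioi (0:ℝ))
    (hg' : ∀ x ∈ Set.Ioi (0:ℝ), g x ∈ Set.Ioi (0:ℝ))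
    (hh' : ∀ x ∈ Set.Ioi (0:ℝ), h x ∈ Set.Ioi (0:ℝ)) :
    (∀ A B : Matrix (Fin n) (Fin n) ℂ, A.PosDef → B.PosDef →
        MLE (cfc f (σ A B)) (η (cfc g A) (cfc h B))) ↔
      (∀ A B : Matrix (Fin n) (Fin n) ℂ, A.PosDef → B.PosDef →
        MLE ((η (cfc (fun x => (g x⁻¹)⁻¹) A)⁻¹ (cfc (fun x => (h x⁻¹)⁻¹) B)⁻¹)⁻¹)
          (cfc (fun x => (f x⁻¹)⁻¹) ((σ A⁻¹ B⁻¹)⁻¹))) :=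
  stmt_2_general hσ hη hf' hg' hh'
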